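/- Let Σ = Graph(u) be a smooth self-shrinker with f = 1/√(1+|Du|²) > 0 and g = log f. Then g satisfies Δ_Σ g − (1/2)⟨X, ∇_Σ g⟩ + |∇_Σ g|² + |A|² = 0 on Σ. -/

import Mathlib

open Real MeasureTheory Metric Filter
open scoped RealInnerProductSpace ENNReal NNReal

noncomputable section

abbrev E (n : ℕ) : Type := EuclideanSpace ℝ (Fin n)

variable {n : ℕ}

/-- `√(1 + |Du|²)`, the area element of the graph of `u`. -/
def aEl (u : E n → ℝ) (x : E n) : ℝ := Real.sqrt (1 + ‖gradient u x‖ ^ 2)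

/-- The vector field `Du/√(1+|Du|²)`. -/
def Vfield (u : E n → ℝ) (x : E n) : E n := (aEl u x)⁻¹ • gradient u x

/-- `div (Du/√(1+|Du|²))`. -/
def divV (u : E n → ℝ) (x : E n) : ℝ :=
  ∑ i, fderiv ℝ (fun y => Vfield u y i) x (EuclideanSpace.single i 1)

/-- The self-shrinker equation for an entire graph. -/
def ShrinkerEq (u : E n → ℝ) : Prop :=
  ∀ x, divV u x = (⟪x, gradient u x⟫ - u x) / (2 * aEl u x)

/-- The mean curvature of the graph of `u` with respect to the upward unit normal. -/
def meanCurv (u : E n → ℝ) (x : E n) : ℝ := -divV u x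

/-- The position vector `X = (x, u x)` of a point of the graph. -/
def Pos (u : E n → ℝ) (x : E n) : E (n + 1) :=
  (WithLp.equiv 2 (Fin (n + 1) → ℝ)).symm (Fin.snoc ((WithLp.equiv 2 (Fin n → ℝ)) x) (u x))

/-- The upward unit normal `n = (-Du, 1)/√(1+|Du|²)` at the point of the graph over `x`. -/
def NmlAt (u : E n → ℝ) (x : E n) : E (n + 1) :=
  (WithLp.equiv 2 (Fin (n + 1) → ℝ)).symm
    (Fin.snoc (fun i => -(Vfield u x i)) ((aEl u x)⁻¹))

/-- Projection of `ℝ^{n+1}` onto the first `n` coordinates. -/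
def projE (p : E (n + 1)) : E n :=
  (WithLp.equiv 2 (Fin n → ℝ)).symm fun i => p i.castSucc

/-- The unit normal of the graph, extended to `ℝ^{n+1}` independently of the last coordinate. -/
def Nml (u : E n → ℝ) (p : E (n + 1)) : E (n + 1) := NmlAt u (projE p)

/-- The inverse induced metric `g^{ij} = δ_{ij} - u_i u_j/(1+|Du|²)` of the graph. -/
def ginv (u : E n → ℝ) (x : E n) (i j : Fin n) : ℝ :=
  (if i = j then 1 else 0) - gradient u x i * gradient u x j / (aEl u x) ^ 2

/-- The Hessian `u_{ij}` of `u`. -/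
def hess (u : E n → ℝ) (x : E n) (i j : Fin n) : ℝ :=
  fderiv ℝ (fun y => gradient u y j) x (EuclideanSpace.single i 1)

/-- `|A|²`, the squared norm of the second fundamental form of the graph of `u`:
`|A|² = g^{ik} g^{jl} h_{ij} h_{kl}` with `h_{ij} = u_{ij}/√(1+|Du|²)`. -/
def A2 (u : E n → ℝ) (x : E n) : ℝ :=
  (∑ i, ∑ j, ∑ k, ∑ l, ginv u x i k * ginv u x j l * hess u x i j * hess u x k l) /
    (aEl u x) ^ 2

/-- Coordinate components `g^{ij} ∂_j f` of the tangential gradient. -/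
def gradCoord (u f : E n → ℝ) (x : E n) (i : Fin n) : ℝ :=
  ∑ j, ginv u x i j * gradient f x j

/-- The tangential gradient `∇_Σ f` (for `f` defined on the base, pulled back to the graph),
as a vector in `ℝ^{n+1}`. -/
def gradSigma (u f : E n → ℝ) (x : E n) : E (n + 1) :=
  (WithLp.equiv 2 (Fin (n + 1) → ℝ)).symm
    (Fin.snoc (fun i => gradCoord u f x i) (∑ i, gradient u x i * gradCoord u f x i))

/-- The Laplace–Beltrami operator of the graph:
`Δ_Σ f = (1/√g) ∂_i (√g g^{ij} ∂_j f)`. -/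
def lapSigma (u f : E n → ℝ) (x : E n) : ℝ :=
  (aEl u x)⁻¹ *
    ∑ i, fderiv ℝ (fun y => aEl u y * gradCoord u f y i) x (EuclideanSpace.single i 1)

/-- The tangential gradient `∇_Σ η` of an ambient function `η : ℝ^{n+1} → ℝ` along the graph:
the ambient gradient minus its normal component. -/
def gradSigmaAmb (u : E n → ℝ) (η : E (n + 1) → ℝ) (x : E n) : E (n + 1) :=
  gradient η (Pos u x) - ⟪gradient η (Pos u x), NmlAt u x⟫ • NmlAt u x

/-- `Vol(Σ ∩ B_R)`: the area of the part of the graph inside the ball of radius `R`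
in `ℝ^{n+1}`, computed by the area formula. -/
def sVol (u : E n → ℝ) (R : ℝ) : ℝ := ∫ x in {x : E n | ‖Pos u x‖ ≤ R}, aEl u x

/-- `M_R = sup_{|x| ≤ R} |u|`. -/
def supBall (u : E n → ℝ) (R : ℝ) : ℝ := ⨆ x : Metric.closedBall (0 : E n) R, |u x.1|

end

/-!
Let `p = Du`, `H = D²u`, `W = √(1 + |p|²)`, `G = id - W⁻² p ⊗ p` (the inverse metric) and
`V = p / W`. Two identities carry the proof: `DV = W⁻¹ G H` is the shape operator, so that
`tr (DV ∘ DV) = |A|²`, and `Dg = -W⁻² H p`, so that the flux `W G Dg` whose divergence defines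
`Δ_Σ g` is `-DV p`. Since second derivatives commute, `div (DV p) = tr (DV ∘ H) + ∂_p (div V)`, and
substituting `H = G H + W⁻² p ⊗ H p` gives `W⁻¹ tr (DV ∘ H) = |A|² + |∇_Σ g|²`. Hence every graph
satisfies `Δ_Σ g + |∇_Σ g|² + |A|² = -W⁻¹ ∂_p (div V)`. On a self-shrinker, differentiating
`W div V = (⟨x, p⟩ - u) / 2` along `p` turns the right-hand side into `⟨X, ∇_Σ g⟩ / 2`.
-/

open InnerProductSpace Topology

theorem trace_comp_eq_sum {ι : Type*} [Fintype ι] [DecidableEq ι]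
    (S T : EuclideanSpace ℝ ι →L[ℝ] EuclideanSpace ℝ ι) :
    LinearMap.trace ℝ (EuclideanSpace ℝ ι) (S ∘L T) =
      ∑ i, ∑ j, S (EuclideanSpace.single j 1) i * T (EuclideanSpace.single i 1) j := by
  let b := (EuclideanSpace.basisFun ι ℝ).toBasis
  rw [ContinuousLinearMap.toLinearMap_comp, LinearMap.trace_eq_matrix_trace ℝ b,
    LinearMap.toMatrix_comp b b b]
  simp [Matrix.trace, Matrix.mul_apply, LinearMap.toMatrix_apply, b]

section Divergence

variable {F : Type*} [NormedAddCommGroup F] [NormedSpace ℝ F]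

/-- The divergence `tr DV` of a vector field. It is `0` by convention where `V` is not
differentiable, and where `F` is infinite-dimensional. -/
noncomputable def divergence (V : F → F) (x : F) : ℝ := LinearMap.trace ℝ F (fderiv ℝ V x)

theorem divergence_congr {V W : F → F} {x : F} (h : V =ᶠ[𝓝 x] W) :
    divergence V x = divergence W x := by
  rw [divergence, divergence, h.fderiv_eq]

theorem divergence_eq_sum {ι : Type*} [Fintype ι] [DecidableEq ι]
    {V : EuclideanSpace ℝ ι → EuclideanSpace ℝ ι}
    {x : EuclideanSpace ℝ ι} (hV : DifferentiableAt ℝ V x) :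
    divergence V x = ∑ i, fderiv ℝ (fun y => V y i) x (EuclideanSpace.single i 1) := by
  rw [divergence, LinearMap.trace_eq_sum_inner _ (EuclideanSpace.basisFun ι ℝ)]
  refine Finset.sum_congr rfl fun i _ => ?_
  have hVi : HasFDerivAt (fun y => V y i) (EuclideanSpace.proj i ∘L fderiv ℝ V x) x :=
    (EuclideanSpace.proj (𝕜 := ℝ) i).hasFDerivAt.comp x hV.hasFDerivAt
  simp [hVi.fderiv, EuclideanSpace.inner_single_left]

variable [FiniteDimensional ℝ F] {V P : F → F} {x : F}

theorem hasFDerivAt_divergence (hV : DifferentiableAt ℝ (fderiv ℝ V) x) :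
    HasFDerivAt (divergence V)
      ((LinearMap.trace ℝ F ∘ₗ ContinuousLinearMap.coeLM ℝ).toContinuousLinearMap ∘L
        fderiv ℝ (fderiv ℝ V) x) x :=
  (LinearMap.trace ℝ F ∘ₗ ContinuousLinearMap.coeLM ℝ).toContinuousLinearMap.hasFDerivAt.comp x
    hV.hasFDerivAt

/-- The symmetry of `D²V` moves the trace from the slot of the outer divergence to that of the
inner derivative. -/
theorem divergence_fderiv_apply (hV : ContDiffAt ℝ 2 V x) (hP : DifferentiableAt ℝ P x) :
    divergence (fun y => fderiv ℝ V y (P y)) x =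
      LinearMap.trace ℝ F (fderiv ℝ V x ∘L fderiv ℝ P x) + fderiv ℝ (divergence V) x (P x) := by
  have hDV : DifferentiableAt ℝ (fderiv ℝ V) x :=
    (hV.fderiv_right (m := 1) le_rfl).differentiableAt one_ne_zero
  have hflip : (fderiv ℝ (fderiv ℝ V) x).flip (P x) = fderiv ℝ (fderiv ℝ V) x (P x) := by
    ext v
    exact hV.isSymmSndFDerivAt (by simp) v (P x)
  rw [divergence, fderiv_clm_apply hDV hP, hflip, (hasFDerivAt_divergence hDV).fderiv]
  simp

end Divergence

section Gradient

variable {F : Type*} [NormedAddCommGroup F] [InnerProductSpace ℝ F] [CompleteSpace F]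
  {f : F → ℝ} {x : F}

theorem contDiffAt_gradient {m k : WithTop ℕ∞} (hf : ContDiffAt ℝ k f x) (hmk : m + 1 ≤ k) :
    ContDiffAt ℝ m (gradient f) x :=
  (toDual ℝ F).symm.contDiff.contDiffAt.comp x (hf.fderiv_right hmk)

theorem inner_fderiv_gradient_comm (hf : ContDiffAt ℝ 2 f x) (v w : F) :
    ⟪fderiv ℝ (gradient f) x v, w⟫ = ⟪v, fderiv ℝ (gradient f) x w⟫ := by
  have hDf : DifferentiableAt ℝ (fderiv ℝ f) x :=
    (hf.fderiv_right (m := 1) le_rfl).differentiableAt one_ne_zero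
  have hgrad : HasFDerivAt (gradient f)
      ((toDual ℝ F).symm.toContinuousLinearEquiv.toContinuousLinearMap ∘L
        fderiv ℝ (fderiv ℝ f) x) x :=
    (toDual ℝ F).symm.toContinuousLinearEquiv.toContinuousLinearMap.hasFDerivAt.comp x
      hDf.hasFDerivAt
  rw [hgrad.fderiv, real_inner_comm _ v]
  simpa using hf.isSymmSndFDerivAt (by simp) v w

end Gradient

section InverseMetric

variable {F : Type*} [NormedAddCommGroup F] [InnerProductSpace ℝ F]

/-- The inverse `id - p ⊗ p / (1 + |p|²)` of the metric `id + p ⊗ p` induced on a graph with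
gradient `p`. -/
noncomputable def invMetric (p : F) : F →L[ℝ] F :=
  .id ℝ F - (1 + ‖p‖ ^ 2)⁻¹ • rankOne ℝ p p

theorem invMetric_apply (p v : F) : invMetric p v = v - (⟪p, v⟫ / (1 + ‖p‖ ^ 2)) • p := by
  simp [invMetric, smul_smul, div_eq_inv_mul]

theorem inner_self_invMetric (p v : F) : ⟪p, invMetric p v⟫ = ⟪p, v⟫ / (1 + ‖p‖ ^ 2) := by
  rw [invMetric_apply, inner_sub_right, inner_smul_right, real_inner_self_eq_norm_sq]
  field_simp
  ring

theorem norm_invMetric_sq_add_inner_sq (p v : F) :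
    ‖invMetric p v‖ ^ 2 + ⟪p, invMetric p v⟫ ^ 2 = ⟪v, invMetric p v⟫ := by
  have hv : v = invMetric p v + (⟪p, invMetric p v⟫) • p := by
    rw [inner_self_invMetric, invMetric_apply]
    abel
  nth_rw 3 [hv]
  rw [inner_add_left, inner_smul_left, real_inner_self_eq_norm_sq, conj_trivial]
  ring

theorem trace_invMetric_comp_sq [FiniteDimensional ℝ F] (p : F) {H : F →L[ℝ] F}
    (hH : ∀ v w, ⟪H v, w⟫ = ⟪v, H w⟫) :
    LinearMap.trace ℝ F (invMetric p ∘L H ∘L H) =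
      LinearMap.trace ℝ F ((invMetric p ∘L H) ∘L invMetric p ∘L H) +
        ⟪H p, invMetric p (H p)⟫ / (1 + ‖p‖ ^ 2) := by
  have hsplit : invMetric p ∘L H ∘L H = (invMetric p ∘L H) ∘L invMetric p ∘L H +
      (1 + ‖p‖ ^ 2)⁻¹ • rankOne ℝ (invMetric p (H p)) (H p) := by
    ext v
    simp [invMetric_apply p (H v), hH p v, smul_smul, div_eq_inv_mul]
  rw [hsplit]
  simp [trace_rankOne, div_eq_inv_mul]

end InverseMetric

section Graph

variable {n : ℕ} {u : E n → ℝ} {x : E n}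

theorem aEl_pos (u : E n → ℝ) (x : E n) : 0 < aEl u x := by
  rw [aEl]
  positivity

theorem aEl_sq (u : E n → ℝ) (x : E n) : aEl u x ^ 2 = 1 + ‖gradient u x‖ ^ 2 :=
  Real.sq_sqrt (by positivity)

theorem contDiffAt_aEl {m k : WithTop ℕ∞} (hu : ContDiffAt ℝ k u x) (hmk : m + 1 ≤ k) :
    ContDiffAt ℝ m (aEl u) x :=
  (contDiffAt_const.add ((contDiffAt_gradient hu hmk).norm_sq ℝ)).sqrt (by positivity)

theorem contDiffAt_Vfield {m k : WithTop ℕ∞} (hu : ContDiffAt ℝ k u x) (hmk : m + 1 ≤ k) :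
    ContDiffAt ℝ m (Vfield u) x :=
  ((contDiffAt_aEl hu hmk).inv (aEl_pos u x).ne').smul (contDiffAt_gradient hu hmk)

theorem differentiableAt_gradient (hu : ContDiffAt ℝ 2 u x) :
    DifferentiableAt ℝ (gradient u) x :=
  (contDiffAt_gradient (m := 1) hu le_rfl).differentiableAt one_ne_zero

theorem hasGradientAt_aEl (hu : ContDiffAt ℝ 2 u x) :
    HasGradientAt (aEl u) ((aEl u x)⁻¹ • fderiv ℝ (gradient u) x (gradient u x)) x := by
  have hsqrt := ((differentiableAt_gradient hu).hasFDerivAt.norm_sq.const_add 1).sqrt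
    (by positivity)
  rw [hasGradientAt_iff_hasFDerivAt]
  refine hsqrt.congr_fderiv (ContinuousLinearMap.ext fun v => ?_)
  simp only [smul_apply, ContinuousLinearMap.comp_apply, coe_innerSL_apply, nsmul_eq_mul,
    Nat.cast_ofNat, smul_eq_mul, map_smul, toDual_apply_apply, inner_fderiv_gradient_comm hu, aEl]
  field_simp

theorem fderiv_Vfield (hu : ContDiffAt ℝ 2 u x) :
    fderiv ℝ (Vfield u) x =
      (aEl u x)⁻¹ • (invMetric (gradient u x) ∘L fderiv ℝ (gradient u) x) := by
  have hinv : HasFDerivAt (fun y => (aEl u y)⁻¹) _ x :=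
    (hasDerivAt_inv (aEl_pos u x).ne').comp_hasFDerivAt x (hasGradientAt_aEl hu).hasFDerivAt
  have hV : HasFDerivAt (Vfield u) _ x := hinv.smul (differentiableAt_gradient hu).hasFDerivAt
  rw [hV.fderiv]
  ext1 v
  simp only [add_apply, smul_apply, ContinuousLinearMap.smulRight_apply,
    ContinuousLinearMap.comp_apply, toDual_apply_apply, real_inner_smul_left,
    inner_fderiv_gradient_comm hu, invMetric_apply, ← aEl_sq, smul_eq_mul]
  module

/-- The function `g = log f`, where `f = (aEl u)⁻¹ = ⟨n, e_{n+1}⟩` is the cosine of the angle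
between the upward unit normal and the vertical. -/
noncomputable def logAngle (u : E n → ℝ) (x : E n) : ℝ := Real.log (aEl u x)⁻¹

theorem gradient_logAngle (hu : ContDiffAt ℝ 2 u x) :
    gradient (logAngle u) x = -((aEl u x ^ 2)⁻¹ • fderiv ℝ (gradient u) x (gradient u x)) := by
  have hlog : HasFDerivAt (logAngle u) _ x :=
    ((hasGradientAt_aEl hu).hasFDerivAt.log (aEl_pos u x).ne').neg.congr_of_eventuallyEq
      (.of_forall fun y => Real.log_inv (aEl u y))
  refine (hasGradientAt_iff_hasFDerivAt.2 (hlog.congr_fderiv ?_)).gradient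
  simp [smul_smul, ← sq]

theorem fderiv_Vfield_gradient (hu : ContDiffAt ℝ 2 u x) :
    fderiv ℝ (Vfield u) x (gradient u x) =
      -(aEl u x • invMetric (gradient u x) (gradient (logAngle u) x)) := by
  have := aEl_pos u x
  rw [fderiv_Vfield hu, gradient_logAngle hu]
  simp only [smul_apply, ContinuousLinearMap.comp_apply, map_neg, map_smul, smul_neg, smul_smul,
    neg_neg]
  field_simp

theorem sum_ginv_mul (u : E n → ℝ) (x v : E n) (i : Fin n) :
    ∑ j, ginv u x i j * v j = invMetric (gradient u x) v i := by
  have hinner : ∑ j, gradient u x j * v j = ⟪gradient u x, v⟫ := by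
    simp only [PiLp.inner_apply, Real.inner_apply]
  simp only [ginv, sub_mul, ite_mul, one_mul, zero_mul, Finset.sum_sub_distrib,
    Finset.sum_ite_eq, Finset.mem_univ, if_true, invMetric_apply, PiLp.sub_apply, PiLp.smul_apply,
    smul_eq_mul, ← aEl_sq, ← hinner, Finset.sum_div, Finset.sum_mul]
  congr 1
  exact Finset.sum_congr rfl fun j _ => by ring

theorem inner_snoc (v w : E n) (a b : ℝ) :
    ⟪(WithLp.equiv 2 (Fin (n + 1) → ℝ)).symm (Fin.snoc v a),
      (WithLp.equiv 2 (Fin (n + 1) → ℝ)).symm (Fin.snoc w b)⟫ = ⟪v, w⟫ + a * b := by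
  simp [PiLp.inner_apply, Fin.sum_univ_castSucc, mul_comm]

theorem gradSigma_eq_snoc (u f : E n → ℝ) (x : E n) :
    gradSigma u f x = (WithLp.equiv 2 (Fin (n + 1) → ℝ)).symm
      (Fin.snoc (invMetric (gradient u x) (gradient f x))
        ⟪gradient u x, invMetric (gradient u x) (gradient f x)⟫) := by
  simp only [gradSigma, gradCoord, sum_ginv_mul, PiLp.inner_apply, Real.inner_apply]

theorem norm_gradSigma_sq (u f : E n → ℝ) (x : E n) :
    ‖gradSigma u f x‖ ^ 2 = ⟪gradient f x, invMetric (gradient u x) (gradient f x)⟫ := by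
  rw [← real_inner_self_eq_norm_sq, gradSigma_eq_snoc, inner_snoc, real_inner_self_eq_norm_sq,
    ← sq, norm_invMetric_sq_add_inner_sq]

theorem inner_Pos_gradSigma (u f : E n → ℝ) (x : E n) :
    ⟪Pos u x, gradSigma u f x⟫ =
      ⟪x, gradient f x⟫ - (⟪x, gradient u x⟫ - u x) * ⟪gradient u x, gradient f x⟫ /
        aEl u x ^ 2 := by
  have hPos : Pos u x = (WithLp.equiv 2 (Fin (n + 1) → ℝ)).symm (Fin.snoc x (u x)) := rfl
  rw [hPos, gradSigma_eq_snoc, inner_snoc, inner_self_invMetric, invMetric_apply,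
    inner_sub_right, inner_smul_right, aEl_sq]
  ring

theorem lapSigma_eq_divergence {f : E n → ℝ}
    (hf : DifferentiableAt ℝ (fun y => aEl u y • invMetric (gradient u y) (gradient f y)) x) :
    lapSigma u f x =
      (aEl u x)⁻¹ * divergence (fun y => aEl u y • invMetric (gradient u y) (gradient f y)) x := by
  simp [lapSigma, divergence_eq_sum hf, gradCoord, sum_ginv_mul]

theorem divV_eq_divergence (hu : ContDiffAt ℝ 2 u x) : divV u x = divergence (Vfield u) x :=
  (divergence_eq_sum
    ((contDiffAt_Vfield (m := 1) hu le_rfl).differentiableAt one_ne_zero)).symm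

theorem lapSigma_logAngle (hu : ContDiffAt ℝ 3 u x) :
    lapSigma u (logAngle u) x =
      -((aEl u x)⁻¹ * (LinearMap.trace ℝ (E n)
          (fderiv ℝ (Vfield u) x ∘L fderiv ℝ (gradient u) x) +
        fderiv ℝ (divV u) x (gradient u x))) := by
  have hu₂ : ContDiffAt ℝ 2 u x := hu.of_le (by norm_num)
  have hnear : ∀ᶠ y in 𝓝 x, ContDiffAt ℝ 2 u y := hu₂.eventually (by simp)
  have hV : ContDiffAt ℝ 2 (Vfield u) x := contDiffAt_Vfield hu (by norm_num)
  have hDV : DifferentiableAt ℝ (fderiv ℝ (Vfield u)) x :=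
    (hV.fderiv_right (m := 1) le_rfl).differentiableAt one_ne_zero
  have hflux : (fun y => aEl u y • invMetric (gradient u y) (gradient (logAngle u) y)) =ᶠ[𝓝 x]
      fun y => -fderiv ℝ (Vfield u) y (gradient u y) := by
    filter_upwards [hnear] with y hy
    rw [fderiv_Vfield_gradient hy, neg_neg]
  have hdivV : divV u =ᶠ[𝓝 x] divergence (Vfield u) := hnear.mono fun y => divV_eq_divergence
  have hdiff := (hDV.clm_apply (differentiableAt_gradient hu₂)).neg.congr_of_eventuallyEq hflux
  rw [lapSigma_eq_divergence hdiff, divergence_congr hflux, hdivV.fderiv_eq,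
    ← divergence_fderiv_apply hV (differentiableAt_gradient hu₂)]
  simp [divergence, fderiv_fun_neg]

theorem hess_eq (hu : ContDiffAt ℝ 2 u x) (i j : Fin n) :
    hess u x i j = fderiv ℝ (gradient u) x (EuclideanSpace.single i 1) j := by
  have hproj := (EuclideanSpace.proj (𝕜 := ℝ) j).hasFDerivAt.comp x
    (differentiableAt_gradient hu).hasFDerivAt
  exact DFunLike.congr_fun hproj.fderiv (EuclideanSpace.single i 1)

theorem ginv_comm (u : E n → ℝ) (x : E n) (i j : Fin n) : ginv u x i j = ginv u x j i := by
  simp [ginv, eq_comm, mul_comm]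

theorem hess_comm (hu : ContDiffAt ℝ 2 u x) (i j : Fin n) : hess u x i j = hess u x j i := by
  have h := inner_fderiv_gradient_comm hu (EuclideanSpace.single i 1) (EuclideanSpace.single j 1)
  simpa [-inner_gradient_left, hess_eq hu, EuclideanSpace.inner_single_left,
    EuclideanSpace.inner_single_right] using h

theorem sum_ginv_mul_hess (hu : ContDiffAt ℝ 2 u x) (i j : Fin n) :
    ∑ k, ginv u x i k * hess u x j k =
      (invMetric (gradient u x) ∘L fderiv ℝ (gradient u) x) (EuclideanSpace.single j 1) i := by
  simp only [hess_eq hu, sum_ginv_mul, ContinuousLinearMap.comp_apply]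

theorem sum_ginv_mul_ginv_mul_hess_mul_hess (hu : ContDiffAt ℝ 2 u x) :
    ∑ i, ∑ j, ∑ k, ∑ l, ginv u x i k * ginv u x j l * hess u x i j * hess u x k l =
      LinearMap.trace ℝ (E n) ((invMetric (gradient u x) ∘L fderiv ℝ (gradient u) x) ∘L
        invMetric (gradient u x) ∘L fderiv ℝ (gradient u) x) := by
  rw [trace_comp_eq_sum, Finset.sum_comm]
  refine Finset.sum_congr rfl fun j _ => ?_
  rw [Finset.sum_comm]
  refine Finset.sum_congr rfl fun k _ => ?_
  rw [← sum_ginv_mul_hess hu, ← sum_ginv_mul_hess hu, mul_comm, Finset.sum_mul_sum]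
  refine Finset.sum_congr rfl fun i _ => Finset.sum_congr rfl fun l _ => ?_
  rw [ginv_comm u x i k, hess_comm hu i j]
  ring

theorem A2_eq_trace (hu : ContDiffAt ℝ 2 u x) :
    A2 u x = LinearMap.trace ℝ (E n) (fderiv ℝ (Vfield u) x ∘L fderiv ℝ (Vfield u) x) := by
  rw [A2, sum_ginv_mul_ginv_mul_hess_mul_hess hu, fderiv_Vfield hu]
  simp only [ContinuousLinearMap.comp_smul, ContinuousLinearMap.smul_comp,
    ContinuousLinearMap.toLinearMap_smul, map_smul, smul_eq_mul]
  field_simp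

theorem inv_aEl_mul_trace_eq_A2_add_norm_sq (hu : ContDiffAt ℝ 2 u x) :
    (aEl u x)⁻¹ * LinearMap.trace ℝ (E n) (fderiv ℝ (Vfield u) x ∘L fderiv ℝ (gradient u) x) =
      A2 u x + ‖gradSigma u (logAngle u) x‖ ^ 2 := by
  have hW := (aEl_pos u x).ne'
  have htr := trace_invMetric_comp_sq (gradient u x) (inner_fderiv_gradient_comm hu)
  rw [A2_eq_trace hu, norm_gradSigma_sq, gradient_logAngle hu, fderiv_Vfield hu]
  simp only [ContinuousLinearMap.smul_comp, ContinuousLinearMap.comp_smul,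
    ContinuousLinearMap.toLinearMap_smul, map_smul, map_neg, inner_neg_neg, real_inner_smul_left,
    real_inner_smul_right, smul_eq_mul]
  rw [ContinuousLinearMap.comp_assoc, htr, ← aEl_sq]
  field_simp

theorem lapSigma_logAngle_add_norm_sq_add_A2 (hu : ContDiffAt ℝ 3 u x) :
    lapSigma u (logAngle u) x + ‖gradSigma u (logAngle u) x‖ ^ 2 + A2 u x =
      -((aEl u x)⁻¹ * fderiv ℝ (divV u) x (gradient u x)) := by
  linear_combination lapSigma_logAngle hu -
    inv_aEl_mul_trace_eq_A2_add_norm_sq (hu.of_le (by norm_num))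

theorem aEl_mul_fderiv_divV_of_shrinker (hu : ContDiffAt ℝ 2 u x)
    (hshr : divV u =ᶠ[𝓝 x] fun y => (⟪y, gradient u y⟫ - u y) / (2 * aEl u y)) (v : E n) :
    aEl u x * fderiv ℝ (divV u) x v =
      ⟪x, fderiv ℝ (gradient u) x v⟫ / 2 -
        divV u x * ⟪fderiv ℝ (gradient u) x (gradient u x), v⟫ / aEl u x := by
  have hnum : HasFDerivAt (fun y => ⟪y, gradient u y⟫ - u y) _ x :=
    ((hasFDerivAt_id x).inner ℝ (differentiableAt_gradient hu).hasFDerivAt).sub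
      (hu.differentiableAt two_ne_zero).hasFDerivAt
  have hW := (hasGradientAt_aEl hu).hasFDerivAt
  have hquot := hnum.differentiableAt.fun_mul ((hW.differentiableAt.const_mul 2).fun_inv
    (mul_ne_zero two_ne_zero (aEl_pos u x).ne'))
  have hdivV : DifferentiableAt ℝ (divV u) x :=
    hquot.congr_of_eventuallyEq (by simpa only [div_eq_mul_inv] using hshr)
  have hprod : (fun y => aEl u y * divV u y) =ᶠ[𝓝 x]
      fun y => (1 / 2) * (⟪y, gradient u y⟫ - u y) := by
    filter_upwards [hshr] with y hy
    have := (aEl_pos u y).ne'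
    rw [hy]
    field_simp
  have hderiv := DFunLike.congr_fun (((hW.mul hdivV.hasFDerivAt).congr_of_eventuallyEq
    hprod.symm).unique (hnum.const_mul (1 / 2))) v
  simp only [add_apply, sub_apply, smul_apply, smul_eq_mul, map_smul, toDual_apply_apply,
    ContinuousLinearMap.comp_apply, ContinuousLinearMap.prod_apply, ContinuousLinearMap.id_apply,
    fderivInnerCLM_apply, id_eq, inner_gradient_right, conj_trivial] at hderiv
  linear_combination hderiv

theorem inner_Pos_gradSigma_logAngle_of_shrinker (hu : ContDiffAt ℝ 2 u x)
    (hshr : divV u =ᶠ[𝓝 x] fun y => (⟪y, gradient u y⟫ - u y) / (2 * aEl u y)) :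
    ⟪Pos u x, gradSigma u (logAngle u) x⟫ =
      -(2 * (aEl u x)⁻¹ * fderiv ℝ (divV u) x (gradient u x)) := by
  have hW := (aEl_pos u x).ne'
  have hdivV := aEl_mul_fderiv_divV_of_shrinker hu hshr (gradient u x)
  rw [hshr.self_of_nhds, mul_comm, ← eq_div_iff hW] at hdivV
  rw [inner_Pos_gradSigma, gradient_logAngle hu, hdivV]
  simp only [inner_neg_right, inner_smul_right, real_inner_comm (gradient u x)]
  field_simp
  ring

end Graph

theorem stmt_4_general {n : ℕ} {u : E n → ℝ} {x : E n} (hu : ContDiffAt ℝ 3 u x)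
    (hshr : divV u =ᶠ[𝓝 x] fun y => (⟪y, gradient u y⟫ - u y) / (2 * aEl u y)) :
    lapSigma u (logAngle u) x - (1 / 2) * ⟪Pos u x, gradSigma u (logAngle u) x⟫ +
      ‖gradSigma u (logAngle u) x‖ ^ 2 + A2 u x = 0 := by
  linear_combination lapSigma_logAngle_add_norm_sq_add_A2 hu -
    (1 / 2) * inner_Pos_gradSigma_logAngle_of_shrinker (hu.of_le (by norm_num)) hshr

/-- for a graphical self-shrinker, `g = log f` with `f = 1/√(1+|Du|²)`
satisfies `Δ_Σ g - (1/2)⟨X, ∇_Σ g⟩ + |∇_Σ g|² + |A|² = 0`. -/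
theorem stmt_4 (n : ℕ) (u : E n → ℝ) (hu : ContDiff ℝ (⊤ : ℕ∞) u) (hshr : ShrinkerEq u) :
    ∀ x, lapSigma u (fun y => Real.log ((aEl u y)⁻¹)) x -
        (1 / 2) * ⟪Pos u x, gradSigma u (fun y => Real.log ((aEl u y)⁻¹)) x⟫ +
        ‖gradSigma u (fun y => Real.log ((aEl u y)⁻¹)) x‖ ^ 2 + A2 u x = 0 :=
  fun _ => stmt_4_general (contDiff_infty.1 hu 3).contDiffAt (.of_forall hshr)
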